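/- Define φ(k) = 1 - k + (π/2) ∫_0^∞ (csch(π u / 2))² · (1 - (1+u²)^{k/2} cos(k arctan u)) du for complex k where the integral converges. Then for every complex k with Re(k) < 2 which is not a pole of the Gamma factor, -2 · Γ(k+1) · (2^{1-k} - 1) · π^{-k} · cos(π k / 2) · ζ(k) = φ(k), where ζ is the Riemann zeta function. -/

import Mathlib

open MeasureTheory Complex Real

/-- The paper's function φ, defined by an integral over (0, ∞); here
`(1+u²)^{k/2} cos(k arctan u)` is formalized as `((1+iu)^k + (1-iu)^k)/2`. -/
noncomputable def phi (k : ℂ) : ℂ :=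
  1 - k + (π / 2) *
    ∫ u in Set.Ioi (0 : ℝ),
      ((1 / Real.sinh (π * u / 2) : ℝ) : ℂ) ^ 2 *
        (1 - ((1 + Complex.I * u) ^ k + (1 - Complex.I * u) ^ k) / 2)

/-!
For `Re a > 0`, `Γ(a) (1 ± iu)^{-a}` is the Mellin transform at `a` of `exp (-(1 ± iu)t)`. Hence,
up to the factor `Γ(a)`, the integral in `phi (-a)` is the Mellin transform of
`exp (-t) * ∫ csch² (πu/2) (1 - cos tu) du`. Expanding `csch² x = ∑ 4n exp (-2nx)` and comparing
with the partial fractions of `coth`, the inner integral is `(2/π) (t coth t - 1)`; and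
`exp (-t) (t coth t - 1) = t csch t - t exp (-t) - exp (-t)`, where the Mellin transform of
`csch t = 2 ∑ exp (-(2n+1)t)` is `2 Γ(s) L(s, χ)` with `χ` the trivial character mod `2`. This
gives `phi k = -2k (1 - 2^{k-1}) ζ(1 - k)` for `Re k < 0`. Since
`1 - ((1 + iu)^k + (1 - iu)^k)/2 = O(u²)` for all real `u`, locally uniformly in `k`, `phi` is
holomorphic on `Re k < 2`, so the identity persists there; the functional equation of `ζ` then turns
`ζ(1 - k)` into `ζ(k)`.
-/

section

open Filter Topology Set

/-! ### Integrals depending on a parameter -/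

theorem aestronglyMeasurable_of_hasDerivAt {𝕜 α E : Type*} [NontriviallyNormedField 𝕜]
    [NormedAddCommGroup E] [NormedSpace 𝕜 E] [MeasurableSpace α] {μ : Measure α}
    {F : 𝕜 → α → E} {F' : α → E} {z₀ : 𝕜}
    (hF : ∀ᶠ z in 𝓝 z₀, AEStronglyMeasurable (F z) μ)
    (hF' : ∀ᵐ t ∂μ, HasDerivAt (F · t) (F' t) z₀) : AEStronglyMeasurable F' μ := by
  obtain ⟨z, hz, hFz⟩ := exists_seq_forall_of_frequently
    (hF.filter_mono (nhdsWithin_le_nhds (s := {z₀}ᶜ))).frequently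
  refine aestronglyMeasurable_of_tendsto_ae atTop (f := fun n t ↦ slope (F · t) z₀ (z n))
    (fun n ↦ ((hFz n).sub hF.self_of_nhds).const_smul _) ?_
  filter_upwards [hF'] with t ht
  exact (hasDerivAt_iff_tendsto_slope.1 ht).comp hz

theorem differentiableAt_integral_of_dominated {α E : Type*} [NormedAddCommGroup E]
    [NormedSpace ℂ E] [MeasurableSpace α] {μ : Measure α} {F : ℂ → α → E} {g : α → ℝ} {U : Set ℂ}
    {z₀ : ℂ} (hU : U ∈ 𝓝 z₀) (hmeas : ∀ z ∈ U, AEStronglyMeasurable (F z) μ)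
    (hdiff : ∀ᵐ t ∂μ, DifferentiableOn ℂ (F · t) U) (hg : Integrable g μ)
    (hbound : ∀ᵐ t ∂μ, ∀ z ∈ U, ‖F z t‖ ≤ g t) :
    DifferentiableAt ℂ (fun z ↦ ∫ t, F z t ∂μ) z₀ := by
  obtain ⟨r, hr, hrU⟩ := Metric.nhds_basis_closedBall.mem_iff.1 hU
  have hr2 : 0 < r / 2 := half_pos hr
  have hsub : ∀ z ∈ Metric.ball z₀ (r / 2), Metric.closedBall z (r / 2) ⊆ U := fun z hz ↦
    (Metric.closedBall_subset_closedBall' (by linarith [Metric.mem_ball.1 hz])).trans hrU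
  have hderiv : ∀ᵐ t ∂μ, ∀ z ∈ Metric.ball z₀ (r / 2),
      HasDerivAt (F · t) (deriv (F · t) z) z := by
    filter_upwards [hdiff] with t ht z hz
    exact (ht.differentiableAt
      (mem_of_superset (Metric.closedBall_mem_nhds z hr2) (hsub z hz))).hasDerivAt
  have cauchy_estimate : ∀ᵐ t ∂μ, ∀ z ∈ Metric.ball z₀ (r / 2),
      ‖deriv (F · t) z‖ ≤ g t / (r / 2) := by
    filter_upwards [hdiff, hbound] with t ht htg z hz
    refine norm_deriv_le_of_forall_mem_sphere_norm_le hr2 ?_ fun w hw ↦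
      htg w (hsub z hz (Metric.sphere_subset_closedBall hw))
    exact (ht.mono fun w hw ↦ hsub z hz (Metric.closure_ball_subset_closedBall hw)).diffContOnCl
  have hz₀ : z₀ ∈ Metric.ball z₀ (r / 2) := Metric.mem_ball_self hr2
  have hmeas₀ : ∀ᶠ z in 𝓝 z₀, AEStronglyMeasurable (F z) μ := mem_of_superset hU hmeas
  have hint : Integrable (F z₀) μ :=
    hg.mono' hmeas₀.self_of_nhds (hbound.mono fun t ht ↦ ht z₀ (mem_of_mem_nhds hU))
  exact (hasDerivAt_integral_of_dominated_loc_of_deriv_le (Metric.ball_mem_nhds z₀ hr2) hmeas₀ hint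
    (aestronglyMeasurable_of_hasDerivAt hmeas₀ (hderiv.mono fun t ht ↦ ht z₀ hz₀))
    cauchy_estimate (hg.div_const _) hderiv).2.differentiableAt

theorem eqOn_of_eventuallyEq_ofReal {E : Type*} [NormedAddCommGroup E] [NormedSpace ℂ E]
    [CompleteSpace E] {f g : ℂ → E} {U : Set ℂ} {x₀ : ℝ} (hf : DifferentiableOn ℂ f U)
    (hg : DifferentiableOn ℂ g U) (hUo : IsOpen U) (hU : IsPreconnected U) (hx₀ : (x₀ : ℂ) ∈ U)
    (hfg : ∀ᶠ x : ℝ in 𝓝 x₀, f x = g x) : EqOn f g U := by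
  have htend : Tendsto ofReal (𝓝[≠] x₀) (𝓝[≠] (x₀ : ℂ)) :=
    continuous_ofReal.continuousAt.continuousWithinAt.tendsto_nhdsWithin fun x hx ↦ by
      simpa using hx
  exact (hf.analyticOnNhd hUo).eqOn_of_preconnected_of_frequently_eq (hg.analyticOnNhd hUo) hU hx₀
    (htend.frequently (hfg.filter_mono nhdsWithin_le_nhds).frequently)

theorem norm_image_sub_le_mul_sq_of_hasDerivAt {𝕜 E : Type*} [RCLike 𝕜] [NormedAddCommGroup E]
    [NormedSpace 𝕜 E] {f f' f'' : 𝕜 → E} {a : 𝕜} {C : ℝ} (hf : ∀ x, HasDerivAt f (f' x) x)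
    (hf' : ∀ x, HasDerivAt f' (f'' x) x) (ha : f' a = 0) (hC : ∀ x, ‖f'' x‖ ≤ C) (x : 𝕜) :
    ‖f x - f a‖ ≤ C * ‖x - a‖ ^ 2 := by
  have hf'_le (y : 𝕜) : ‖f' y‖ ≤ C * ‖y - a‖ := by
    simpa [ha] using convex_univ.norm_image_sub_le_of_norm_hasDerivWithin_le
      (fun y _ ↦ (hf' y).hasDerivWithinAt) (fun y _ ↦ hC y) (mem_univ a) (mem_univ y)
  have hC0 : 0 ≤ C := (norm_nonneg _).trans (hC a)
  have h := (convex_closedBall a ‖x - a‖).norm_image_sub_le_of_norm_hasDerivWithin_le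
    (f := f) (C := C * ‖x - a‖) (y := x) (fun y _ ↦ (hf y).hasDerivWithinAt)
    (fun y hy ↦ (hf'_le y).trans (by gcongr; exact mem_closedBall_iff_norm.1 hy))
    (Metric.mem_closedBall_self (norm_nonneg _)) (mem_closedBall_iff_norm.2 le_rfl)
  linarith

/-! ### Mellin transforms -/

theorem mellin_integral_comm {α E : Type*} [NormedAddCommGroup E] [NormedSpace ℂ E]
    [MeasurableSpace α] {μ : Measure α} [SFinite μ] {F : α → ℝ → E} {s : ℂ}
    (hF : Integrable (fun p : α × ℝ ↦ (p.2 : ℂ) ^ (s - 1) • F p.1 p.2)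
      (μ.prod (volume.restrict (Ioi 0)))) :
    mellin (fun t ↦ ∫ x, F x t ∂μ) s = ∫ x, mellin (F x) s ∂μ := by
  simp only [mellin, ← integral_smul]
  exact (integral_integral_swap hF).symm

theorem integrableOn_rpow_mul_exp_neg_mul {c b : ℝ} (hc : -1 < c) (hb : 0 < b) :
    IntegrableOn (fun t : ℝ ↦ t ^ c * Real.exp (-b * t)) (Ioi 0) := by
  simpa using integrableOn_rpow_mul_exp_neg_mul_rpow hc one_pos hb

theorem norm_cpow_smul {E : Type*} [NormedAddCommGroup E] [NormedSpace ℂ E] {t : ℝ} (ht : 0 < t)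
    (s : ℂ) (x : E) : ‖(t : ℂ) ^ s • x‖ = t ^ s.re * ‖x‖ := by
  rw [norm_smul, norm_cpow_eq_rpow_re_of_pos ht]

theorem aestronglyMeasurable_cpow_smul {E : Type*} [NormedAddCommGroup E] [NormedSpace ℂ E]
    {f : ℝ → E} {μ : Measure ℝ} (hf : AEStronglyMeasurable f μ) (s : ℂ) :
    AEStronglyMeasurable (fun t : ℝ ↦ (t : ℂ) ^ s • f t) μ :=
  (by fun_prop : Measurable fun t : ℝ ↦ (t : ℂ) ^ s).aestronglyMeasurable.smul hf

theorem mellinConvergent_of_norm_le {E : Type*} [NormedAddCommGroup E] [NormedSpace ℂ E]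
    {f : ℝ → E} {s : ℂ} {b c C : ℝ} (hf : AEStronglyMeasurable f (volume.restrict (Ioi 0)))
    (hb : 0 < b) (hs : 0 < s.re + c) (hbound : ∀ t > 0, ‖f t‖ ≤ C * (t ^ c * Real.exp (-b * t))) :
    MellinConvergent f s := by
  refine ((integrableOn_rpow_mul_exp_neg_mul (c := s.re + c - 1) (by linarith) hb).const_mul
    C).mono' (aestronglyMeasurable_cpow_smul hf _) ?_
  filter_upwards [ae_restrict_mem measurableSet_Ioi] with t (ht : 0 < t)
  calc ‖(t : ℂ) ^ (s - 1) • f t‖ = t ^ (s.re - 1) * ‖f t‖ := by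
        rw [norm_cpow_smul ht, sub_re, one_re]
    _ ≤ t ^ (s.re - 1) * (C * (t ^ c * Real.exp (-b * t))) := by
        gcongr
        exact hbound t ht
    _ = C * (t ^ (s.re + c - 1) * Real.exp (-b * t)) := by
        rw [add_sub_right_comm, Real.rpow_add ht]
        ring

theorem hasMellin_cpow_smul {E : Type*} [NormedAddCommGroup E] [NormedSpace ℂ E] {f : ℝ → E}
    {s a : ℂ} {m : E} (h : HasMellin f (s + a) m) : HasMellin (fun t ↦ (t : ℂ) ^ a • f t) s m :=
  ⟨MellinConvergent.cpow_smul.2 h.1, (mellin_cpow_smul f s a).trans h.2⟩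

theorem norm_exp_neg_mul_ofReal (z : ℂ) (t : ℝ) :
    ‖Complex.exp (-z * t)‖ = Real.exp (-z.re * t) := by
  simp [Complex.norm_exp]

theorem mellinConvergent_exp_neg_mul {s z : ℂ} (hs : 0 < s.re) (hz : 0 < z.re) :
    MellinConvergent (fun t : ℝ ↦ Complex.exp (-z * t)) s :=
  mellinConvergent_of_norm_le (b := z.re) (c := 0) (C := 1) (by fun_prop) hz (by simpa using hs)
    fun t _ ↦ by rw [norm_exp_neg_mul_ofReal, Real.rpow_zero, one_mul, one_mul]

theorem differentiableOn_mellin_exp_neg_mul {s : ℂ} (hs : 0 < s.re) :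
    DifferentiableOn ℂ (fun z ↦ mellin (fun t : ℝ ↦ Complex.exp (-z * t)) s) {z | 0 < z.re} := by
  intro z₀ (hz₀ : 0 < z₀.re)
  have hnhds : {z : ℂ | z₀.re / 2 < z.re} ∈ 𝓝 z₀ :=
    (isOpen_lt continuous_const continuous_re).mem_nhds (half_lt_self hz₀)
  refine (differentiableAt_integral_of_dominated hnhds
    (fun z _ ↦ aestronglyMeasurable_cpow_smul (by fun_prop) _)
    (.of_forall fun t ↦ by fun_prop)
    (integrableOn_rpow_mul_exp_neg_mul (c := (s - 1).re) (by simpa using hs) (half_pos hz₀))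
    ?_).differentiableWithinAt
  filter_upwards [ae_restrict_mem measurableSet_Ioi] with t (ht : 0 < t) z (hz : z₀.re / 2 < z.re)
  rw [norm_cpow_smul ht, norm_exp_neg_mul_ofReal]
  gcongr

-- The case of real `z` is Euler's integral; both sides are holomorphic in `z`.
theorem hasMellin_exp_neg_mul {s z : ℂ} (hs : 0 < s.re) (hz : 0 < z.re) :
    HasMellin (fun t : ℝ ↦ Complex.exp (-z * t)) s (z ^ (-s) * Gamma s) := by
  refine ⟨mellinConvergent_exp_neg_mul hs hz, ?_⟩
  have hright : DifferentiableOn ℂ (fun z : ℂ ↦ z ^ (-s) * Gamma s) {z | 0 < z.re} := fun z hz ↦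
    ((differentiableAt_id.cpow_const (Or.inl hz)).mul_const _).differentiableWithinAt
  refine eqOn_of_eventuallyEq_ofReal (x₀ := 1) (differentiableOn_mellin_exp_neg_mul hs) hright
    (isOpen_lt continuous_const continuous_re) (convex_halfSpace_re_gt 0).isPreconnected
    (by simp) ?_ hz
  filter_upwards [lt_mem_nhds one_pos] with r hr
  have hinv : (r : ℂ) ^ (-s) = (1 / r) ^ s := by
    rw [one_div, inv_cpow _ _ (by rw [arg_ofReal_of_nonneg hr.le]; exact pi_pos.ne), cpow_neg]
  simp only [mellin, smul_eq_mul, neg_mul, hinv, integral_cpow_mul_exp_neg_mul_Ioi hs hr]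

/-! ### Symmetric means of complex powers -/

/-- The symmetric mean `((1 + iu)^k + (1 - iu)^k) / 2`. For real `k` it is `Re ((1 + iu)^k)`, and
for complex `k` it is the meaning of `(1 + u²)^{k/2} cos (k arctan u)`. -/
noncomputable def cpowMean (k : ℂ) (u : ℝ) : ℂ := ((1 + I * u) ^ k + (1 - I * u) ^ k) / 2

theorem cpowMean_zero_right (k : ℂ) : cpowMean k 0 = 1 := by simp [cpowMean]

theorem measurable_cpowMean (k : ℂ) : Measurable (cpowMean k) := by
  unfold cpowMean
  fun_prop

theorem one_add_I_mul_mem_slitPlane (u : ℝ) : 1 + I * u ∈ slitPlane := Or.inl (by simp)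

theorem one_sub_I_mul_mem_slitPlane (u : ℝ) : 1 - I * u ∈ slitPlane := Or.inl (by simp)

theorem differentiable_cpowMean_left (u : ℝ) : Differentiable ℂ fun k ↦ cpowMean k u := by
  have h₁ := slitPlane_ne_zero (one_add_I_mul_mem_slitPlane u)
  have h₂ := slitPlane_ne_zero (one_sub_I_mul_mem_slitPlane u)
  exact ((differentiable_id.const_cpow (.inl h₁)).add
    (differentiable_id.const_cpow (.inl h₂))).div_const 2

theorem norm_cpow_le_exp_of_one_le_norm {z w : ℂ} (hz : 1 ≤ ‖z‖) (hw : w.re ≤ 0) :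
    ‖z ^ w‖ ≤ Real.exp (π * |w.im|) := by
  refine (norm_cpow_le z w).trans ?_
  rw [div_eq_mul_inv, ← Real.exp_neg, ← one_mul (Real.exp (π * |w.im|))]
  gcongr
  · exact Real.rpow_le_one_of_one_le_of_nonpos hz hw
  · refine (neg_le_abs _).trans ?_
    rw [abs_mul]
    gcongr
    exact abs_arg_le_pi z

theorem norm_cpowMean_le {k : ℂ} (hk : k.re ≤ 0) (u : ℝ) :
    ‖cpowMean k u‖ ≤ Real.exp (π * |k.im|) := by
  have h₁ : ‖(1 + I * u) ^ k‖ ≤ Real.exp (π * |k.im|) :=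
    norm_cpow_le_exp_of_one_le_norm (by simpa using abs_re_le_norm (1 + I * u)) hk
  have h₂ : ‖(1 - I * u) ^ k‖ ≤ Real.exp (π * |k.im|) :=
    norm_cpow_le_exp_of_one_le_norm (by simpa using abs_re_le_norm (1 - I * u)) hk
  rw [cpowMean, norm_div, RCLike.norm_ofNat]
  linarith [norm_add_le ((1 + I * u) ^ k) ((1 - I * u) ^ k)]

theorem hasDerivAt_one_add_I_mul_cpow (k : ℂ) (u : ℝ) :
    HasDerivAt (fun u : ℝ ↦ (1 + I * u) ^ k) (I * k * (1 + I * u) ^ (k - 1)) u := by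
  have h : HasDerivAt (fun u : ℝ ↦ 1 + I * u) I u := by
    simpa using ((hasDerivAt_id (u : ℂ)).comp_ofReal.const_mul I).const_add 1
  convert! (hasStrictDerivAt_cpow_const (c := k)
    (one_add_I_mul_mem_slitPlane u)).hasDerivAt.comp u h using 1
  ring

theorem hasDerivAt_one_sub_I_mul_cpow (k : ℂ) (u : ℝ) :
    HasDerivAt (fun u : ℝ ↦ (1 - I * u) ^ k) (-(I * k * (1 - I * u) ^ (k - 1))) u := by
  have h := (hasDerivAt_one_add_I_mul_cpow k (-u)).scomp u (hasDerivAt_neg u)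
  simpa [Function.comp_def, sub_eq_add_neg] using h

theorem hasDerivAt_cpowMean (k : ℂ) (u : ℝ) :
    HasDerivAt (cpowMean k) (I * k * ((1 + I * u) ^ (k - 1) - (1 - I * u) ^ (k - 1)) / 2) u := by
  convert! ((hasDerivAt_one_add_I_mul_cpow k u).add
    (hasDerivAt_one_sub_I_mul_cpow k u)).div_const 2 using 1
  ring

theorem hasDerivAt_deriv_cpowMean (k : ℂ) (u : ℝ) :
    HasDerivAt
      (fun u : ℝ ↦ I * k * ((1 + I * u) ^ (k - 1) - (1 - I * u) ^ (k - 1)) / 2)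
      (-(k * (k - 1) * cpowMean (k - 1 - 1) u)) u := by
  convert! (((hasDerivAt_one_add_I_mul_cpow (k - 1) u).sub
    (hasDerivAt_one_sub_I_mul_cpow (k - 1) u)).const_mul (I * k)).div_const 2 using 1
  rw [cpowMean]
  linear_combination -(k * (k - 1) *
    ((1 + I * u) ^ (k - 1 - 1) + (1 - I * u) ^ (k - 1 - 1)) / 2) * I_sq

theorem norm_one_sub_cpowMean_le {k : ℂ} (hk : k.re ≤ 2) (u : ℝ) :
    ‖1 - cpowMean k u‖ ≤ ‖k‖ * ‖k - 1‖ * Real.exp (π * |k.im|) * u ^ 2 := by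
  have hderiv₂ (v : ℝ) : ‖-(k * (k - 1) * cpowMean (k - 1 - 1) v)‖ ≤
      ‖k‖ * ‖k - 1‖ * Real.exp (π * |k.im|) := by
    rw [norm_neg, norm_mul, norm_mul]
    gcongr
    simpa using norm_cpowMean_le (k := k - 1 - 1) (by simp; linarith) v
  have h := norm_image_sub_le_mul_sq_of_hasDerivAt (a := 0) (hasDerivAt_cpowMean k)
    (hasDerivAt_deriv_cpowMean k) (by simp) hderiv₂ u
  rwa [cpowMean_zero_right, norm_sub_rev, sub_zero, Real.norm_eq_abs, sq_abs] at h

theorem hasMellin_exp_neg_mul_one_sub_cos {a : ℂ} (ha : 0 < a.re) (u : ℝ) :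
    HasMellin (fun t : ℝ ↦ (Real.exp (-t) * (1 - Real.cos (t * u)) : ℂ)) a
      (Gamma a * (1 - cpowMean (-a) u)) := by
  have h₀ := hasMellin_exp_neg_mul ha (z := 1) (by simp)
  have h₁ := hasMellin_exp_neg_mul ha (z := 1 + I * u) (by simp)
  have h₂ := hasMellin_exp_neg_mul ha (z := 1 - I * u) (by simp)
  have hadd := hasMellin_add h₁.1 h₂.1
  have hsub := hasMellin_sub h₀.1 (hadd.1.div_const 2)
  have hcos (t : ℝ) : (Real.exp (-t) * (1 - Real.cos (t * u)) : ℂ) = Complex.exp (-1 * t) -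
      (Complex.exp (-(1 + I * u) * t) + Complex.exp (-(1 - I * u) * t)) / 2 := by
    have h₁ : -(1 + I * u) * t = -1 * t + -(t * u) * I := by ring
    have h₂ : -(1 - I * u) * t = -1 * t + t * u * I := by ring
    rw [h₁, h₂, Complex.exp_add, Complex.exp_add]
    push_cast
    rw [Complex.cos]
    ring_nf
  simp only [hcos]
  refine ⟨hsub.1, ?_⟩
  rw [hsub.2, mellin_div_const, hadd.2, h₀.2, h₁.2, h₂.2, one_cpow, cpowMean]
  ring

section SecondMoment

variable {μ : Measure ℝ} {w : ℝ → ℂ}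

theorem differentiableOn_integral_mul_one_sub_cpowMean (hw : AEStronglyMeasurable w μ)
    (hw₂ : Integrable (fun u : ℝ ↦ w u * u ^ 2) μ) :
    DifferentiableOn ℂ (fun k ↦ ∫ u, w u * (1 - cpowMean k u) ∂μ) {k | k.re < 2} := by
  intro k₀ hk₀
  have hU : {k : ℂ | k.re < 2} ∈ 𝓝 k₀ :=
    (isOpen_lt continuous_re continuous_const).mem_nhds hk₀
  refine (differentiableAt_integral_of_dominated
    (inter_mem (Metric.ball_mem_nhds k₀ one_pos) hU)
    (fun k _ ↦ hw.mul ((measurable_cpowMean k).const_sub 1).aestronglyMeasurable)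
    (.of_forall fun u ↦
      (((differentiable_cpowMean_left u).const_sub 1).const_mul _).differentiableOn)
    (hw₂.norm.const_mul ((‖k₀‖ + 1) * (‖k₀‖ + 1 + 1) * Real.exp (π * (‖k₀‖ + 1))))
    (.of_forall ?_)).differentiableWithinAt
  intro u k ⟨hkball, hk⟩
  have hk_le : ‖k‖ ≤ ‖k₀‖ + 1 := by
    linarith [norm_sub_norm_le k k₀, mem_ball_iff_norm.1 hkball]
  have hk1_le : ‖k - 1‖ ≤ ‖k₀‖ + 1 + 1 := (norm_sub_le k 1).trans (by simpa using hk_le)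
  have him_le : |k.im| ≤ ‖k₀‖ + 1 := (abs_im_le_norm k).trans hk_le
  calc ‖w u * (1 - cpowMean k u)‖
      = ‖w u‖ * ‖1 - cpowMean k u‖ := norm_mul _ _
    _ ≤ ‖w u‖ * (‖k‖ * ‖k - 1‖ * Real.exp (π * |k.im|) * u ^ 2) := by
        gcongr
        exact norm_one_sub_cpowMean_le (le_of_lt hk) u
    _ ≤ ‖w u‖ * ((‖k₀‖ + 1) * (‖k₀‖ + 1 + 1) * Real.exp (π * (‖k₀‖ + 1)) * u ^ 2) := by
        gcongr
    _ = (‖k₀‖ + 1) * (‖k₀‖ + 1 + 1) * Real.exp (π * (‖k₀‖ + 1)) * ‖w u * u ^ 2‖ := by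
        rw [norm_mul, norm_pow, norm_real, Real.norm_eq_abs, sq_abs]
        ring

theorem integrable_cpow_smul_mul_exp_neg_mul_one_sub_cos [SFinite μ] {a : ℂ} (ha : 0 < a.re)
    (hw : AEStronglyMeasurable w μ) (hw₂ : Integrable (fun u : ℝ ↦ w u * u ^ 2) μ) :
    Integrable (fun p : ℝ × ℝ ↦ (p.2 : ℂ) ^ (a - 1) •
        (w p.1 * (Real.exp (-p.2) * (1 - Real.cos (p.2 * p.1)))))
      (μ.prod (volume.restrict (Ioi 0))) := by
  have hb : IntegrableOn (fun t : ℝ ↦ t ^ (a.re + 1) * Real.exp (-1 * t)) (Ioi 0) :=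
    integrableOn_rpow_mul_exp_neg_mul (by linarith) one_pos
  refine (hw₂.norm.mul_prod hb).mono' ?_ ?_
  · exact (by fun_prop : Measurable fun p : ℝ × ℝ ↦ (p.2 : ℂ) ^ (a - 1)).aestronglyMeasurable.smul
      (hw.comp_fst.mul (by fun_prop))
  · filter_upwards [Measure.quasiMeasurePreserving_snd.ae (ae_restrict_mem measurableSet_Ioi)]
      with ⟨u, t⟩ (ht : 0 < t)
    have hcos : ‖(1 - Real.cos (t * u) : ℂ)‖ ≤ t ^ 2 * u ^ 2 := by
      rw [← ofReal_one, ← ofReal_sub, norm_real,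
        Real.norm_of_nonneg (sub_nonneg.2 (Real.cos_le_one _))]
      nlinarith [Real.one_sub_sq_div_two_le_cos (x := t * u), sq_nonneg (t * u)]
    calc ‖(t : ℂ) ^ (a - 1) • (w u * (Real.exp (-t) * (1 - Real.cos (t * u))))‖
        = t ^ (a.re - 1) * (‖w u‖ * (Real.exp (-t) * ‖(1 - Real.cos (t * u) : ℂ)‖)) := by
          rw [norm_cpow_smul ht, norm_mul, norm_mul, norm_real, Real.norm_of_nonneg (exp_pos _).le,
            sub_re, one_re]
      _ ≤ t ^ (a.re - 1) * (‖w u‖ * (Real.exp (-t) * (t ^ 2 * u ^ 2))) := by gcongr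
      _ = ‖w u * u ^ 2‖ * (t ^ (a.re + 1) * Real.exp (-1 * t)) := by
          rw [norm_mul, norm_pow, norm_real, Real.norm_eq_abs, sq_abs,
            show a.re + 1 = a.re - 1 + 2 by ring, Real.rpow_add ht, Real.rpow_two, neg_one_mul]
          ring

theorem mellin_exp_neg_mul_integral_mul_one_sub_cos [SFinite μ] {a : ℂ} (ha : 0 < a.re)
    (hw : AEStronglyMeasurable w μ) (hw₂ : Integrable (fun u : ℝ ↦ w u * u ^ 2) μ) :
    mellin (fun t ↦ Real.exp (-t) * ∫ u, w u * (1 - Real.cos (t * u)) ∂μ) a =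
      Gamma a * ∫ u, w u * (1 - cpowMean (-a) u) ∂μ := by
  calc mellin (fun t ↦ Real.exp (-t) * ∫ u, w u * (1 - Real.cos (t * u)) ∂μ) a
      = mellin (fun t ↦ ∫ u, w u * (Real.exp (-t) * (1 - Real.cos (t * u))) ∂μ) a := by
        simp only [← integral_const_mul, mul_left_comm]
    _ = ∫ u, mellin (fun t : ℝ ↦ w u * (Real.exp (-t) * (1 - Real.cos (t * u)))) a ∂μ :=
        mellin_integral_comm (integrable_cpow_smul_mul_exp_neg_mul_one_sub_cos ha hw hw₂)
    _ = ∫ u, Gamma a * (w u * (1 - cpowMean (-a) u)) ∂μ := by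
        congr with u
        rw [mul_left_comm, ← (hasMellin_exp_neg_mul_one_sub_cos ha u).2]
        exact mellin_const_smul _ _ (w u)
    _ = Gamma a * ∫ u, w u * (1 - cpowMean (-a) u) ∂μ := integral_const_mul _ _

end SecondMoment

/-! ### The hyperbolic cosecant -/

/-- The hyperbolic cosecant, the square of which is the weight in `phi`. As `1 / 0 = 0`, its value
at `0` is `0`. -/
noncomputable def csch (x : ℝ) : ℝ := 1 / Real.sinh x

theorem measurable_csch : Measurable csch := Real.measurable_sinh.const_div 1

theorem mul_exp_half_le_two_mul_sinh {x : ℝ} (hx : 0 ≤ x) :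
    x * Real.exp (x / 2) ≤ 2 * Real.sinh x := by
  have hsinh : x / 2 ≤ Real.sinh (x / 2) := Real.self_le_sinh_iff.2 (by positivity)
  have hcosh : Real.exp (x / 2) ≤ 2 * Real.cosh (x / 2) := by
    rw [Real.cosh_eq]
    linarith [Real.exp_pos (-(x / 2))]
  calc x * Real.exp (x / 2) = 2 * (x / 2 * Real.exp (x / 2)) := by ring
    _ ≤ 2 * (Real.sinh (x / 2) * (2 * Real.cosh (x / 2))) := by gcongr
    _ = 2 * Real.sinh x := by
        rw [← mul_div_cancel₀ x two_ne_zero, Real.sinh_two_mul]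
        ring_nf

theorem csch_le {x : ℝ} (hx : 0 < x) : csch x ≤ 2 * (x⁻¹ * Real.exp (-(1 / 2) * x)) := by
  have hsinh := Real.sinh_pos_iff.2 hx
  have hexp : Real.exp (-(1 / 2) * x) = (Real.exp (x / 2))⁻¹ := by
    rw [← Real.exp_neg]
    ring_nf
  rw [csch, hexp, ← mul_inv, ← div_eq_mul_inv, div_le_div_iff₀ hsinh (by positivity), one_mul]
  exact mul_exp_half_le_two_mul_sinh hx.le

theorem csch_pos {x : ℝ} (hx : 0 < x) : 0 < csch x := one_div_pos.2 (Real.sinh_pos_iff.2 hx)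

theorem csch_sq_mul_sq_le {x : ℝ} (hx : 0 < x) : csch x ^ 2 * x ^ 2 ≤ 4 * Real.exp (-1 * x) := by
  calc csch x ^ 2 * x ^ 2 ≤ (2 * (x⁻¹ * Real.exp (-(1 / 2) * x))) ^ 2 * x ^ 2 := by
        have hcsch := (csch_pos hx).le
        gcongr
        exact csch_le hx
    _ = 4 * Real.exp (-(1 / 2) * x) ^ 2 := by
        field_simp
        norm_num
    _ = 4 * Real.exp (-1 * x) := by
        rw [← Real.exp_nat_mul]
        push_cast
        ring_nf

theorem integrableOn_csch_sq_mul_sq : IntegrableOn (fun x ↦ csch x ^ 2 * x ^ 2) (Ioi 0) := by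
  refine ((integrableOn_exp_mul_Ioi neg_one_lt_zero 0).const_mul 4).mono'
    ((measurable_csch.pow_const 2).mul (by fun_prop)).aestronglyMeasurable ?_
  filter_upwards [ae_restrict_mem measurableSet_Ioi] with x hx
  rw [Real.norm_of_nonneg (by positivity)]
  exact csch_sq_mul_sq_le hx

theorem csch_eq_two_mul_exp_neg_div (x : ℝ) :
    csch x = 2 * Real.exp (-x) / (1 - Real.exp (-x) ^ 2) := by
  have h : 1 - Real.exp (-x) ^ 2 = 2 * Real.exp (-x) * Real.sinh x := by
    rw [Real.sinh_eq, Real.exp_neg]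
    field_simp
  rw [h, ← div_div, div_self (by positivity), csch]

theorem hasSum_csch {x : ℝ} (hx : 0 < x) :
    HasSum (fun n : ℕ ↦ 2 * Real.exp (-(2 * n + 1 : ℕ) * x)) (csch x) := by
  have hlt : Real.exp (-x) ^ 2 < 1 := pow_lt_one₀ (by positivity) (by simpa using hx) two_ne_zero
  rw [csch_eq_two_mul_exp_neg_div, div_eq_mul_inv]
  convert! (hasSum_geometric_of_lt_one (by positivity) hlt).mul_left (2 * Real.exp (-x)) using 2
    with n
  rw [← pow_mul, mul_assoc, ← pow_succ', ← Real.exp_nat_mul]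
  ring_nf

theorem hasSum_csch_sq {x : ℝ} (hx : 0 < x) :
    HasSum (fun n : ℕ ↦ 4 * ((n + 1) * Real.exp (-(2 * (n + 1)) * x))) (csch x ^ 2) := by
  have hlt : ‖Real.exp (-x) ^ 2‖ < 1 := by
    rw [Real.norm_of_nonneg (by positivity)]
    exact pow_lt_one₀ (by positivity) (by simpa using hx) two_ne_zero
  have h := (hasSum_coe_mul_geometric_of_norm_lt_one hlt).mul_left 4
  rw [← hasSum_nat_add_iff' 1] at h
  convert! h using 2 with n
  · rw [← pow_mul, ← Real.exp_nat_mul]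
    push_cast
    ring_nf
  · rw [csch_eq_two_mul_exp_neg_div, div_pow]
    simp only [Finset.sum_range_one, Nat.cast_zero, pow_zero, zero_mul, mul_zero, sub_zero]
    ring

theorem integrableOn_exp_neg_mul_mul_one_sub_cos {a : ℝ} (ha : 0 < a) (t : ℝ) :
    IntegrableOn (fun x ↦ Real.exp (-a * x) * (1 - Real.cos (t * x))) (Ioi 0) := by
  refine ((integrableOn_exp_mul_Ioi (neg_lt_zero.2 ha) 0).mul_const 2).mono' (by fun_prop)
    (.of_forall fun x ↦ ?_)
  rw [norm_mul, Real.norm_of_nonneg (by positivity),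
    Real.norm_of_nonneg (sub_nonneg.2 (Real.cos_le_one _))]
  gcongr
  linarith [Real.neg_one_le_cos (t * x)]

theorem integral_exp_neg_mul_mul_one_sub_cos {a : ℝ} (ha : 0 < a) (t : ℝ) :
    ∫ x in Ioi (0 : ℝ), Real.exp (-a * x) * (1 - Real.cos (t * x)) =
      t ^ 2 / (a * (a ^ 2 + t ^ 2)) := by
  have hre₁ : (-a : ℂ).re < 0 := by simpa using ha
  have hre₂ : (-a + t * I : ℂ).re < 0 := by simpa using ha
  have hint₁ := integrableOn_exp_mul_complex_Ioi hre₁ 0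
  have hint₂ := integrableOn_exp_mul_complex_Ioi hre₂ 0
  have hre (x : ℝ) : Real.exp (-a * x) * (1 - Real.cos (t * x)) =
      RCLike.re (Complex.exp (-a * x) - Complex.exp ((-a + t * I) * x)) := by
    simp only [RCLike.re_to_complex, sub_re, exp_re, neg_re, neg_im, add_re, add_im, mul_re, mul_im,
      ofReal_re, ofReal_im, I_re, I_im, mul_zero, zero_mul, sub_zero, add_zero, zero_add, neg_zero,
      mul_one, Real.cos_zero]
    ring
  simp only [hre]
  rw [integral_re (f := fun x : ℝ ↦ Complex.exp (-a * x) - Complex.exp ((-a + t * I) * x))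
    (hint₁.sub hint₂), integral_sub hint₁ hint₂, integral_exp_mul_complex_Ioi hre₁,
    integral_exp_mul_complex_Ioi hre₂]
  simp only [RCLike.re_to_complex, ofReal_zero, mul_zero, Complex.exp_zero, sub_re, div_re,
    normSq_apply, neg_re, neg_im, add_re, add_im, mul_re, mul_im, one_re, one_im, ofReal_re,
    ofReal_im, I_re, I_im, mul_one, sub_self, neg_zero, zero_add, zero_mul, add_zero, zero_div,
    mul_neg, neg_mul, neg_neg]
  field_simp
  ring

theorem hasSum_mul_cosh_div_sinh_sub_one {x : ℝ} (hx : x ≠ 0) :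
    HasSum (fun n : ℕ ↦ 2 * x ^ 2 / ((n + 1) ^ 2 + x ^ 2))
      (π * x * (Real.cosh (π * x) / Real.sinh (π * x)) - 1) := by
  have hmem : (x * I : ℂ) ∈ Complex.integerComplement := by
    rintro ⟨n, hn⟩
    exact hx (by simpa using (congrArg im hn).symm)
  have hcot : HasSum (cotTerm (x * I)) (π * cot (π * (x * I)) - 1 / (x * I)) := by
    rw [cot_series_rep' hmem]
    exact (summable_cotTerm hmem).hasSum
  have hxc : (x : ℂ) ≠ 0 := ofReal_ne_zero.2 hx
  rw [← Complex.hasSum_ofReal]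
  convert! hcot.mul_left (x * I) using 1
  · ext n
    rw [cotTerm_identity hmem, show (x * I + (n + 1)) * (x * I - (n + 1)) =
      -((n + 1 : ℂ) ^ 2 + x ^ 2) by linear_combination (x : ℂ) ^ 2 * I_sq]
    push_cast
    rw [one_div, inv_neg, div_eq_mul_inv]
    linear_combination (2 * x ^ 2 * ((n + 1 : ℂ) ^ 2 + x ^ 2)⁻¹) * I_sq
  · rw [← mul_assoc, Complex.cot_eq_cos_div_sin, Complex.cos_mul_I, Complex.sin_mul_I]
    push_cast
    field_simp

theorem integral_csch_sq_mul_one_sub_cos {t : ℝ} (ht : t ≠ 0) :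
    ∫ x in Ioi (0 : ℝ), csch x ^ 2 * (1 - Real.cos (2 * t * x)) =
      π * t * (Real.cosh (π * t) / Real.sinh (π * t)) - 1 := by
  have hsum := hasSum_mul_cosh_div_sinh_sub_one ht
  let F (n : ℕ) (x : ℝ) : ℝ :=
    4 * ((n + 1) * (Real.exp (-(2 * (n + 1)) * x) * (1 - Real.cos (2 * t * x))))
  have hF (n : ℕ) : ∫ x in Ioi (0 : ℝ), F n x = 2 * t ^ 2 / ((n + 1) ^ 2 + t ^ 2) := by
    rw [integral_const_mul, integral_const_mul,
      integral_exp_neg_mul_mul_one_sub_cos (by positivity)]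
    field_simp
    ring
  have hF_nonneg (n : ℕ) (x : ℝ) : 0 ≤ F n x := by
    have hcos := sub_nonneg.2 (Real.cos_le_one (2 * t * x))
    positivity
  have hF_sum {x : ℝ} (hx : x ∈ Ioi 0) :
      ∑' n, F n x = csch x ^ 2 * (1 - Real.cos (2 * t * x)) := by
    rw [← ((hasSum_csch_sq hx).mul_right _).tsum_eq]
    simp only [F, mul_assoc]
  have h := hasSum_integral_of_summable_integral_norm (μ := volume.restrict (Ioi 0)) (F := F)
    (fun n ↦ ((integrableOn_exp_neg_mul_mul_one_sub_cos (by positivity) _).const_mul _).const_mul _)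
    (by simpa only [Real.norm_of_nonneg (hF_nonneg _ _), hF] using hsum.summable)
  rw [← setIntegral_congr_fun measurableSet_Ioi fun x hx ↦ hF_sum hx]
  simp only [hF] at h
  exact h.unique hsum

theorem integral_csch_pi_mul_sq_mul_one_sub_cos {t : ℝ} (ht : t ≠ 0) :
    π / 2 * ∫ u in Ioi (0 : ℝ), csch (π * u / 2) ^ 2 * (1 - Real.cos (t * u)) =
      t * (Real.cosh t / Real.sinh t) - 1 := by
  have h := integral_comp_mul_left_Ioi
    (fun x ↦ csch x ^ 2 * (1 - Real.cos (2 * (t / π) * x))) 0 (b := π / 2) (by positivity)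
  rw [mul_zero, integral_csch_sq_mul_one_sub_cos (div_ne_zero ht pi_ne_zero),
    mul_div_cancel₀ _ pi_ne_zero, smul_eq_mul, inv_div] at h
  have hcongr (u : ℝ) : csch (π * u / 2) ^ 2 * (1 - Real.cos (t * u)) =
      csch (π / 2 * u) ^ 2 * (1 - Real.cos (2 * (t / π) * (π / 2 * u))) := by
    congr 3 <;> field_simp
  simp only [hcongr, h]
  field_simp

theorem exp_neg_mul_cosh_div_sinh {t : ℝ} (ht : t ≠ 0) :
    Real.exp (-t) * (Real.cosh t / Real.sinh t) = csch t - Real.exp (-t) := by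
  have hsinh := Real.sinh_ne_zero.2 ht
  have hcosh : Real.exp (-t) * (Real.cosh t + Real.sinh t) = 1 := by
    rw [Real.cosh_add_sinh, ← Real.exp_add, neg_add_cancel, Real.exp_zero]
  rw [csch, eq_sub_iff_add_eq, eq_div_iff hsinh, add_mul, mul_assoc, div_mul_cancel₀ _ hsinh,
    ← mul_add, hcosh]

theorem hasSum_trivChar_mul_exp_neg {t : ℝ} (ht : 0 < t) :
    HasSum (fun n : ℕ ↦ 2 * (1 : DirichletCharacter ℂ 2) n * Real.exp (-n * t)) (csch t) := by
  have hinj : Function.Injective fun n : ℕ ↦ 2 * n + 1 := fun m n h ↦ by simpa using h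
  have hodd (n : ℕ) : (1 : DirichletCharacter ℂ 2) (2 * n + 1 : ℕ) = 1 :=
    MulChar.one_apply ((ZMod.isUnit_iff_coprime _ _).2 (by simp))
  have heven (n : ℕ) (hn : n ∉ range fun n ↦ 2 * n + 1) : (1 : DirichletCharacter ℂ 2) n = 0 := by
    refine MulChar.map_nonunit _ fun hunit ↦ hn ?_
    obtain ⟨m, hm⟩ := Nat.coprime_two_right.1 ((ZMod.isUnit_iff_coprime _ _).1 hunit)
    exact ⟨m, hm.symm⟩
  refine (hinj.hasSum_iff fun n hn ↦ by rw [heven n hn, mul_zero, zero_mul]).1 ?_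
  simp only [Function.comp_def, hodd]
  exact_mod_cast hasSum_ofReal.2 (hasSum_csch ht)

theorem hasMellin_csch {s : ℂ} (hs : 1 < s.re) :
    HasMellin (fun t ↦ (csch t : ℂ)) s
      (2 * Gamma s * DirichletCharacter.LFunctionTrivChar 2 s) := by
  have hconv : MellinConvergent (fun t ↦ (csch t : ℂ)) s := by
    refine mellinConvergent_of_norm_le (b := 1 / 2) (c := -1) (C := 2)
      (measurable_csch.complex_ofReal.aestronglyMeasurable) (by norm_num) (by linarith) ?_
    intro t ht
    rw [norm_real, Real.norm_of_nonneg (csch_pos ht).le, Real.rpow_neg_one]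
    exact csch_le ht
  refine ⟨hconv, ?_⟩
  have hzero : (1 : DirichletCharacter ℂ 2) 0 = 0 := MulChar.map_zero _
  have hsummable : Summable fun n : ℕ ↦
      ‖2 * (1 : DirichletCharacter ℂ 2) n‖ / (n : ℝ) ^ s.re := by
    refine ((Real.summable_one_div_nat_rpow.2 hs).mul_left 2).of_nonneg_of_le
      (fun n ↦ by positivity) fun n ↦ ?_
    rw [norm_mul, RCLike.norm_ofNat, mul_div_assoc]
    gcongr
    exact DirichletCharacter.norm_le_one _ _
  have h := hasSum_mellin (p := fun n : ℕ ↦ (n : ℝ)) (fun n ↦ ?_) (one_pos.trans hs)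
    (fun t ht ↦ hasSum_trivChar_mul_exp_neg ht) hsummable
  · rw [← h.tsum_eq, DirichletCharacter.LFunctionTrivChar,
      DirichletCharacter.LFunction_eq_LSeries _ hs, LSeries, ← tsum_mul_left]
    refine tsum_congr fun n ↦ ?_
    rcases eq_or_ne n 0 with rfl | hn
    · simp [hzero]
    · rw [LSeries.term_of_ne_zero hn, ofReal_natCast]
      ring
  · rcases eq_or_ne n 0 with rfl | hn
    · exact .inl (by simp [hzero])
    · exact .inr (by positivity)

/-! ### Holomorphy and values of `phi` -/

theorem aestronglyMeasurable_csch_pi_mul_sq {μ : Measure ℝ} :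
    AEStronglyMeasurable (fun u : ℝ ↦ (csch (π * u / 2) : ℂ) ^ 2) μ :=
  ((measurable_csch.comp (by fun_prop)).complex_ofReal.pow_const 2).aestronglyMeasurable

theorem integrableOn_csch_pi_mul_sq_mul_sq :
    IntegrableOn (fun u : ℝ ↦ (csch (π * u / 2) : ℂ) ^ 2 * u ^ 2) (Ioi 0) := by
  have h : IntegrableOn (fun u : ℝ ↦ csch (π / 2 * u) ^ 2 * (π / 2 * u) ^ 2) (Ioi 0) :=
    (integrableOn_Ioi_comp_mul_left_iff (fun x ↦ csch x ^ 2 * x ^ 2) 0 (by positivity)).2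
      (by simpa using integrableOn_csch_sq_mul_sq)
  refine ((h.const_mul ((π / 2) ^ 2)⁻¹).ofReal (𝕜 := ℂ)).congr (.of_forall fun u ↦ ?_)
  have hu : π / 2 * u = π * u / 2 := by ring
  simp only [hu, coe_algebraMap, ofReal_mul, ofReal_inv, ofReal_pow, ofReal_div, ofReal_ofNat]
  field_simp

theorem phi_eq_integral_cpowMean (k : ℂ) : phi k = 1 - k + π / 2 *
    ∫ u in Ioi (0 : ℝ), (csch (π * u / 2) : ℂ) ^ 2 * (1 - cpowMean k u) := rfl

theorem differentiableOn_phi : DifferentiableOn ℂ phi {k | k.re < 2} :=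
  (differentiableOn_id.const_sub 1).add
    ((differentiableOn_integral_mul_one_sub_cpowMean aestronglyMeasurable_csch_pi_mul_sq
      integrableOn_csch_pi_mul_sq_mul_sq).const_mul (π / 2 : ℂ))

theorem exp_neg_mul_integral_csch_pi_mul_sq_mul_one_sub_cos {t : ℝ} (ht : t ≠ 0) :
    (π / 2 * (Real.exp (-t) *
        ∫ u in Ioi (0 : ℝ), (csch (π * u / 2) : ℂ) ^ 2 * (1 - Real.cos (t * u))) : ℂ) =
      t * (csch t - Real.exp (-t)) - Real.exp (-t) := by
  have h : Real.exp (-t) * (π / 2 * ∫ u in Ioi (0 : ℝ),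
      csch (π * u / 2) ^ 2 * (1 - Real.cos (t * u))) =
        t * (csch t - Real.exp (-t)) - Real.exp (-t) := by
    rw [integral_csch_pi_mul_sq_mul_one_sub_cos ht, ← exp_neg_mul_cosh_div_sinh ht]
    ring
  have hcast := integral_complex_ofReal (μ := volume.restrict (Ioi 0))
    (f := fun u ↦ csch (π * u / 2) ^ 2 * (1 - Real.cos (t * u)))
  simp only [ofReal_mul, ofReal_pow, ofReal_sub, ofReal_one] at hcast
  rw [mul_left_comm, hcast]
  exact_mod_cast h

theorem hasMellin_mul_csch_sub_exp_neg {a : ℂ} (ha : 0 < a.re) :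
    HasMellin (fun t : ℝ ↦ (t * (csch t - Real.exp (-t)) - Real.exp (-t) : ℂ)) a
      (2 * Gamma (a + 1) * DirichletCharacter.LFunctionTrivChar 2 (a + 1) - Gamma (a + 1) -
        Gamma a) := by
  have hexp {s : ℂ} (hs : 0 < s.re) : HasMellin (fun t : ℝ ↦ (Real.exp (-t) : ℂ)) s (Gamma s) := by
    simpa using hasMellin_exp_neg_mul hs (z := 1) (by simp)
  have hcsch := hasMellin_csch (s := a + 1) (by simpa using ha)
  have hexp₁ := hexp (s := a + 1) (by simp; linarith)
  have hsub := hasMellin_sub hcsch.1 hexp₁.1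
  have hmul := hasMellin_cpow_smul (a := 1) hsub
  simp only [cpow_one, smul_eq_mul] at hmul
  have h := hasMellin_sub hmul.1 (hexp ha).1
  rwa [hmul.2, hcsch.2, hexp₁.2, (hexp ha).2] at h

theorem phi_neg_eq_mul_LFunctionTrivChar {a : ℂ} (ha : 0 < a.re) :
    phi (-a) = 2 * a * DirichletCharacter.LFunctionTrivChar 2 (a + 1) := by
  have hmellin : π / 2 * (Gamma a * ∫ u in Ioi (0 : ℝ),
      (csch (π * u / 2) : ℂ) ^ 2 * (1 - cpowMean (-a) u)) =
        2 * Gamma (a + 1) * DirichletCharacter.LFunctionTrivChar 2 (a + 1) - Gamma (a + 1) -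
          Gamma a := by
    rw [← mellin_exp_neg_mul_integral_mul_one_sub_cos ha aestronglyMeasurable_csch_pi_mul_sq
      integrableOn_csch_pi_mul_sq_mul_sq, ← (hasMellin_mul_csch_sub_exp_neg ha).2]
    refine (mellin_const_smul _ a (π / 2 : ℂ)).symm.trans ?_
    refine setIntegral_congr_fun measurableSet_Ioi fun t (ht : 0 < t) ↦ ?_
    simp only [smul_eq_mul, exp_neg_mul_integral_csch_pi_mul_sq_mul_one_sub_cos ht.ne']
  have ha₀ : a ≠ 0 := fun h ↦ by simp [h] at ha
  refine mul_left_cancel₀ (Gamma_ne_zero_of_re_pos ha) ?_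
  rw [Gamma_add_one a ha₀] at hmellin
  rw [phi_eq_integral_cpowMean]
  linear_combination hmellin

theorem phi_eq_LFunctionTrivChar₁ {k : ℂ} (hk : k.re < 2) :
    phi k = 2 * DirichletCharacter.LFunctionTrivChar₁ 2 (1 - k) := by
  have hright : DifferentiableOn ℂ
      (fun k ↦ 2 * DirichletCharacter.LFunctionTrivChar₁ 2 (1 - k)) {k | k.re < 2} :=
    (((DirichletCharacter.differentiable_LFunctionTrivChar₁ 2).comp
      (differentiable_id.const_sub 1)).const_mul 2).differentiableOn
  refine eqOn_of_eventuallyEq_ofReal (x₀ := -1) differentiableOn_phi hright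
    (isOpen_lt continuous_re continuous_const) (convex_halfSpace_re_lt 2).isPreconnected
    (by norm_num) ?_ hk
  filter_upwards [gt_mem_nhds neg_one_lt_zero] with x hx
  have hne : 1 - (x : ℂ) ≠ 1 := by simpa using hx.ne
  rw [DirichletCharacter.LFunctionTrivChar₁, Function.update_of_ne hne, ← neg_neg (x : ℂ),
    phi_neg_eq_mul_LFunctionTrivChar (by simpa using hx)]
  ring_nf

theorem phi_zero : phi 0 = 1 := by
  rw [phi_eq_LFunctionTrivChar₁ (by simp), sub_zero, DirichletCharacter.LFunctionTrivChar₁,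
    Function.update_self, Nat.prime_two.primeFactors]
  norm_num

theorem phi_eq_mul_riemannZeta {k : ℂ} (hk : k.re < 2) (hk₀ : k ≠ 0) :
    phi k = -2 * k * (1 - 2 ^ (k - 1)) * riemannZeta (1 - k) := by
  have hne : 1 - k ≠ 1 := by simpa using hk₀
  rw [phi_eq_LFunctionTrivChar₁ hk, DirichletCharacter.LFunctionTrivChar₁,
    Function.update_of_ne hne, DirichletCharacter.LFunctionTrivChar_eq_mul_riemannZeta hne,
    Nat.prime_two.primeFactors, Finset.prod_singleton, neg_sub, Nat.cast_ofNat]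
  ring

end

theorem stmt8 (k : ℂ) (hre : k.re < 2) (hk : ∀ n : ℕ, k ≠ -(n + 1 : ℂ)) :
    -2 * Complex.Gamma (k + 1) * ((2 : ℂ) ^ ((1 : ℂ) - k) - 1) * (π : ℂ) ^ (-k) *
        Complex.cos (π * k / 2) * riemannZeta k = phi k := by
  rcases eq_or_ne k 0 with rfl | hk₀
  · norm_num [phi_zero, riemannZeta_zero]
  rw [phi_eq_mul_riemannZeta hre hk₀]
  rcases eq_or_ne k 1 with rfl | hk₁
  · simp
  have hpole (n : ℕ) : k ≠ -n := by
    rcases n with _ | n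
    · simpa using hk₀
    · simpa using hk n
  have htwo_pi : (2 * π : ℂ) ^ (-k) = 2 ^ (-k) * (π : ℂ) ^ (-k) := by
    simpa using mul_cpow_ofReal_nonneg zero_le_two pi_pos.le (-k)
  have htwo : (2 : ℂ) ^ k * 2 ^ (-k) = 1 := by
    rw [← cpow_add _ _ two_ne_zero, add_neg_cancel, cpow_zero]
  rw [riemannZeta_one_sub hpole hk₁, Gamma_add_one k hk₀, htwo_pi, sub_eq_add_neg 1 k,
    cpow_add _ _ two_ne_zero, cpow_sub _ _ two_ne_zero, cpow_one]
  linear_combination (-2 * k * (π : ℂ) ^ (-k) * Gamma k * Complex.cos (π * k / 2) *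
    riemannZeta k) * htwo
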